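/- arXiv:1511.02567 — 2 statements merged into one kernel-verified Lean document; each statement's English description precedes it below -/
import Mathlib

section
/- Let k ≥ l ≥ m ≥ 1 be integers with l ≥ 2. If m < √(k+l), then the point (a₁,a₂,a₃) = (k/(2(k+l+m−2)), l/(2(k+l+m−2)), m/(2(k+l+m−2))) lies in O₃. -/
/-!
Work with the unnormalised parameters `(k, l, m)`, allowed to be real, instead of `(a₁, a₂, a₃)`.
With `d = k + l + m - 2`, `u = kl + km + lm` and `v = klm` one has `Q = NN d u v / d ^ 12` for an
explicit polynomial `NN` (`Qpoly_param`), so `Q ≠ 0` follows from `NN > 0`.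

The integer triples in question lie in a connected region of `ℝ³` (`region`, see
`isPreconnected_region`) made of the convex set `2 ≤ m ≤ l ≤ k`, `m² + 1 ≤ k + l`, the convex face
`m = 1`, `2 ≤ l ≤ k`, a segment joining these two, and a further segment that ends at
`(8/3, 2, 4/3)`, which is sent to `(1/3, 1/4, 1/6)`.  On each piece `NN > 0`.  The hard piece is the
first: for fixed `s = k + l` and `m`, `NN` is a quartic polynomial in `t = (k - m)(l - m) ≥ 0`
(`NN_expand`).  Up to the factor `E4` that quartic is
`(E4 t² - λ)² + E4 E3 t (t - β)²` plus a quadratic polynomial in `t`, and the choice `λ = 8 s³ x³`,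
`β = x` with `x = k + l - m² - 1` makes the discriminant of the quadratic negative.  The
discriminant inequality reduces to a polynomial in `x ≥ 0` and `z = m - 2 ≥ 0` with positive
coefficients (`disc_pos`).

The image of the region avoids `Ω`, but contains `(1/3, 1/4, 1/6)` rather than the base point
`(1/6, 1/4, 1/3)` of `O₃`.  As `Q` is symmetric, permuted copies of the image avoid `Ω` as well.
The copies with coordinates ordered as `(k, l, m)`, `(k, m, l)`, `(l, m, k)`, `(m, l, k)` form a
chain in which consecutive ones meet, at a point with `l = m`, `k = l`, `l = m` respectively.  Their
union is connected and contains both the base point and the given point (`wallach_mem_O₃`).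
-/

noncomputable section

/-- The symmetric polynomial `Q` in the elementary symmetric functions of `a₁, a₂, a₃`. -/
def Qpoly (a₁ a₂ a₃ : ℝ) : ℝ :=
  let s₁ := a₁ + a₂ + a₃
  let s₂ := a₁ * a₂ + a₁ * a₃ + a₂ * a₃
  let s₃ := a₁ * a₂ * a₃
  (2 * s₁ + 4 * s₃ - 1) * (64 * s₁ ^ 5 - 64 * s₁ ^ 4 + 8 * s₁ ^ 3 + 12 * s₁ ^ 2 - 6 * s₁ + 1
      + 240 * s₃ * s₁ ^ 2 - 240 * s₃ * s₁ - 1536 * s₃ ^ 2 * s₁ - 4096 * s₃ ^ 3 + 60 * s₃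
      + 768 * s₃ ^ 2)
    - 8 * s₁ * (2 * s₁ + 4 * s₃ - 1) * (2 * s₁ - 32 * s₃ - 1) * (10 * s₁ + 32 * s₃ - 5) * s₂
    - 16 * s₁ ^ 2 * (13 - 52 * s₁ + 640 * s₃ * s₁ + 1024 * s₃ ^ 2 - 320 * s₃ + 52 * s₁ ^ 2)
      * s₂ ^ 2
    + 64 * (2 * s₁ - 1) * (2 * s₁ - 32 * s₃ - 1) * s₂ ^ 3
    + 2048 * s₁ * (2 * s₁ - 1) * s₂ ^ 4

/-- The surface `Ω = {Q = 0}` in `ℝ³`. -/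
def OmegaSet : Set (ℝ × ℝ × ℝ) := {p | Qpoly p.1 p.2.1 p.2.2 = 0}

/-- The open cube `(0, 1/2)³`. -/
def cube : Set (ℝ × ℝ × ℝ) :=
  {p | p.1 ∈ Set.Ioo (0 : ℝ) (1 / 2) ∧ p.2.1 ∈ Set.Ioo (0 : ℝ) (1 / 2) ∧
    p.2.2 ∈ Set.Ioo (0 : ℝ) (1 / 2)}

/-- `O₁`: the connected component of `(0,1/2)³ \ Ω` containing `(1/6, 1/6, 1/6)`. -/
def O₁ : Set (ℝ × ℝ × ℝ) := connectedComponentIn (cube \ OmegaSet) (1 / 6, 1 / 6, 1 / 6)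

/-- `O₃`: the connected component of `(0,1/2)³ \ Ω` containing `(1/6, 1/4, 1/3)`. -/
def O₃ : Set (ℝ × ℝ × ℝ) := connectedComponentIn (cube \ OmegaSet) (1 / 6, 1 / 4, 1 / 3)

/-- The point `(a₁, a₂, a₃)` associated to `SO(k+l+m)/SO(k)×SO(l)×SO(m)`. -/
def aPoint (k l m : ℕ) : ℝ × ℝ × ℝ :=
  ((k : ℝ) / (2 * ((k : ℝ) + l + m - 2)), (l : ℝ) / (2 * ((k : ℝ) + l + m - 2)),
    (m : ℝ) / (2 * ((k : ℝ) + l + m - 2)))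

/-! ### The numerator of `Q` -/

/-- The numerator of `Q`, over the denominator `d ^ 12`, in terms of `d = k + l + m - 2`,
`u = kl + km + lm` and `v = klm`. -/
def NN (d u v : ℝ) : ℝ :=
    16 * d ^ 9 + 80 * d ^ 8 - 40 * d ^ 7 * u + 4 * d ^ 7 * v + 192 * d ^ 7 - 13 * d ^ 6 * u ^ 2
      - 80 * d ^ 6 * u + 80 * d ^ 6 * v + 128 * d ^ 6 - 52 * d ^ 5 * u ^ 2 + 54 * d ^ 5 * u * v
      + 48 * d ^ 5 * v + 4 * d ^ 4 * u ^ 3 - 20 * d ^ 4 * u ^ 2 * v - 52 * d ^ 4 * u ^ 2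
      + 108 * d ^ 4 * u * v - 33 * d ^ 4 * v ^ 2 + 32 * d ^ 4 * v + 8 * d ^ 3 * u ^ 4
      - 80 * d ^ 3 * u ^ 2 * v + 48 * d ^ 3 * u * v ^ 2 + 16 * d ^ 2 * u ^ 4
      - 8 * d ^ 2 * u ^ 3 * v - 4 * d ^ 2 * u ^ 2 * v ^ 2 - 80 * d ^ 2 * u ^ 2 * v
      + 96 * d ^ 2 * u * v ^ 2 - 28 * d ^ 2 * v ^ 3 - 16 * d * u ^ 2 * v ^ 2 + 8 * d * u * v ^ 3
      - 16 * u ^ 2 * v ^ 2 + 16 * u * v ^ 3 - 4 * v ^ 4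

/-- With `s = k + l` fixed, the constant coefficient of `NN` as a polynomial in `t = (k - m)(l - m)`. -/
def E0 (s m : ℝ) : ℝ :=
    16 * s ^ 9 - 48 * s ^ 8 * m ^ 2 + 64 * s ^ 8 * m - 208 * s ^ 8 + 48 * s ^ 7 * m ^ 4
      - 96 * s ^ 7 * m ^ 3 + 496 * s ^ 7 * m ^ 2 - 704 * s ^ 7 * m + 1216 * s ^ 7
      - 16 * s ^ 6 * m ^ 6 - 192 * s ^ 6 * m ^ 4 + 608 * s ^ 6 * m ^ 3 - 2368 * s ^ 6 * m ^ 2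
      + 3712 * s ^ 6 * m - 4352 * s ^ 6 + 32 * s ^ 5 * m ^ 7 - 80 * s ^ 5 * m ^ 6
      + 192 * s ^ 5 * m ^ 5 + 368 * s ^ 5 * m ^ 4 - 2816 * s ^ 5 * m ^ 3 + 8832 * s ^ 5 * m ^ 2
      - 13312 * s ^ 5 * m + 11008 * s ^ 5 - 16 * s ^ 4 * m ^ 8 + 32 * s ^ 4 * m ^ 7
      - 112 * s ^ 4 * m ^ 6 + 896 * s ^ 4 * m ^ 5 - 4768 * s ^ 4 * m ^ 4 + 15104 * s ^ 4 * m ^ 3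
      - 30208 * s ^ 4 * m ^ 2 + 35840 * s ^ 4 * m - 20992 * s ^ 4 + 64 * s ^ 3 * m ^ 8
      - 544 * s ^ 3 * m ^ 7 + 2576 * s ^ 3 * m ^ 6 - 9152 * s ^ 3 * m ^ 5 + 25280 * s ^ 3 * m ^ 4
      - 52224 * s ^ 3 * m ^ 3 + 75520 * s ^ 3 * m ^ 2 - 68608 * s ^ 3 * m + 29696 * s ^ 3
      - 96 * s ^ 2 * m ^ 8 + 1120 * s ^ 2 * m ^ 7 - 6208 * s ^ 2 * m ^ 6 + 21888 * s ^ 2 * m ^ 5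
      - 54016 * s ^ 2 * m ^ 4 + 94720 * s ^ 2 * m ^ 3 - 113664 * s ^ 2 * m ^ 2
      + 83968 * s ^ 2 * m - 28672 * s ^ 2 + 64 * s * m ^ 8 - 896 * s * m ^ 7 + 5632 * s * m ^ 6
      - 20992 * s * m ^ 5 + 51200 * s * m ^ 4 - 83968 * s * m ^ 3 + 90112 * s * m ^ 2
      - 57344 * s * m + 16384 * s - 16 * m ^ 8 + 256 * m ^ 7 - 1792 * m ^ 6 + 7168 * m ^ 5
      - 17920 * m ^ 4 + 28672 * m ^ 3 - 28672 * m ^ 2 + 16384 * m - 4096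

/-- With `s = k + l` fixed, the coefficient of `t` of `NN` as a polynomial in `t = (k - m)(l - m)`. -/
def E1 (s m : ℝ) : ℝ :=
    -48 * s ^ 7 * m - 40 * s ^ 7 + 96 * s ^ 6 * m ^ 3 - 48 * s ^ 6 * m ^ 2 + 160 * s ^ 6 * m
      + 480 * s ^ 6 - 48 * s ^ 5 * m ^ 5 + 24 * s ^ 5 * m ^ 4 - 144 * s ^ 5 * m ^ 3
      - 504 * s ^ 5 * m ^ 2 + 1056 * s ^ 5 * m - 2400 * s ^ 5 + 64 * s ^ 4 * m ^ 6
      - 192 * s ^ 4 * m ^ 5 + 768 * s ^ 4 * m ^ 4 - 2096 * s ^ 4 * m ^ 3 + 4992 * s ^ 4 * m ^ 2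
      - 7104 * s ^ 4 * m + 6400 * s ^ 4 - 16 * s ^ 3 * m ^ 7 - 72 * s ^ 3 * m ^ 6
      + 720 * s ^ 3 * m ^ 5 - 2872 * s ^ 3 * m ^ 4 + 7488 * s ^ 3 * m ^ 3 - 13632 * s ^ 3 * m ^ 2
      + 15872 * s ^ 3 * m - 9600 * s ^ 3 + 48 * s ^ 2 * m ^ 7 - 240 * s ^ 2 * m ^ 6
      + 192 * s ^ 2 * m ^ 5 + 1632 * s ^ 2 * m ^ 4 - 6912 * s ^ 2 * m ^ 3 + 13824 * s ^ 2 * m ^ 2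
      - 15360 * s ^ 2 * m + 7680 * s ^ 2 - 48 * s * m ^ 7 + 440 * s * m ^ 6 - 1632 * s * m ^ 5
      + 2976 * s * m ^ 4 - 2048 * s * m ^ 3 - 1920 * s * m ^ 2 + 4608 * s * m - 2560 * s
      + 16 * m ^ 7 - 192 * m ^ 6 + 960 * m ^ 5 - 2560 * m ^ 4 + 3840 * m ^ 3 - 3072 * m ^ 2
      + 1024 * m

/-- With `s = k + l` fixed, the coefficient of `t²` of `NN` as a polynomial in `t = (k - m)(l - m)`. -/
def E2 (s m : ℝ) : ℝ :=
    -13 * s ^ 6 + 92 * s ^ 5 * m ^ 2 + 104 * s ^ 5 - 52 * s ^ 4 * m ^ 4 + 92 * s ^ 4 * m ^ 3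
      - 242 * s ^ 4 * m ^ 2 - 104 * s ^ 4 * m - 312 * s ^ 4 + 40 * s ^ 3 * m ^ 5
      - 84 * s ^ 3 * m ^ 4 + 244 * s ^ 3 * m ^ 3 - 536 * s ^ 3 * m ^ 2 + 624 * s ^ 3 * m
      + 416 * s ^ 3 - 4 * s ^ 2 * m ^ 6 - 76 * s ^ 2 * m ^ 5 + 507 * s ^ 2 * m ^ 4
      - 1416 * s ^ 2 * m ^ 3 + 2088 * s ^ 2 * m ^ 2 - 1248 * s ^ 2 * m - 208 * s ^ 2
      + 8 * s * m ^ 6 + 4 * s * m ^ 5 - 288 * s * m ^ 4 + 1056 * s * m ^ 3 - 1536 * s * m ^ 2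
      + 832 * s * m - 4 * m ^ 6 + 32 * m ^ 5 - 96 * m ^ 4 + 128 * m ^ 3 - 64 * m ^ 2

/-- With `s = k + l` fixed, the coefficient of `t³` of `NN` as a polynomial in `t = (k - m)(l - m)`. -/
def E3 (s m : ℝ) : ℝ :=
    44 * s ^ 4 * m + 4 * s ^ 4 - 24 * s ^ 3 * m ^ 3 + 72 * s ^ 3 * m ^ 2 - 160 * s ^ 3 * m
      - 32 * s ^ 3 + 8 * s ^ 2 * m ^ 4 + 12 * s ^ 2 * m ^ 3 - 88 * s ^ 2 * m ^ 2 + 80 * s ^ 2 * m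
      + 96 * s ^ 2 - 16 * s * m ^ 4 + 80 * s * m ^ 3 - 160 * s * m ^ 2 + 192 * s * m - 128 * s
      + 4 * m ^ 4 - 32 * m ^ 3 + 96 * m ^ 2 - 128 * m + 64

/-- With `s = k + l` fixed, the coefficient of `t⁴` of `NN` as a polynomial in `t = (k - m)(l - m)`. -/
def E4 (s m : ℝ) : ℝ :=
    8 * s ^ 3 - 4 * s ^ 2 * m ^ 2 + 16 * s ^ 2 * m - 32 * s ^ 2 + 8 * s * m ^ 2 - 32 * s * m
      + 32 * s

/-- The expansion of `NN` in powers of `t = (k - m)(l - m)`, where `s = k + l`, so that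
`kl = m (s - m) + t`. -/
theorem NN_expand (s m t : ℝ) :
    NN (s + m - 2) (m * (s - m) + t + m * s) ((m * (s - m) + t) * m)
      = E0 s m + E1 s m * t + E2 s m * t ^ 2 + E3 s m * t ^ 3 + E4 s m * t ^ 4 := by
  unfold NN E0 E1 E2 E3 E4; ring

/-! ### Positivity for `m ≥ 2` -/

theorem E4_pos {x z : ℝ} (hx : 0 ≤ x) (hz : 0 ≤ z) :
    0 < E4 ((z + 2) ^ 2 + 1 + x) (z + 2) := by
  unfold E4; ring_nf; positivity

theorem E3_pos {x z : ℝ} (hx : 0 ≤ x) (hz : 0 ≤ z) :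
    0 < E3 ((z + 2) ^ 2 + 1 + x) (z + 2) := by
  unfold E3; ring_nf; positivity

/-- Up to the factor `E4`, the leading coefficient of the quadratic remainder, for
`λ = 8 s³ x³` and `β = x`. -/
theorem lead_pos {x z : ℝ} (hx : 0 ≤ x) (hz : 0 ≤ z) :
    0 < E2 ((z + 2) ^ 2 + 1 + x) (z + 2) + 2 * (8 * ((z + 2) ^ 2 + 1 + x) ^ 3 * x ^ 3)
      + 2 * x * E3 ((z + 2) ^ 2 + 1 + x) (z + 2) := by
  unfold E2 E3; ring_nf; positivity

set_option maxHeartbeats 4000000 in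
set_option maxRecDepth 10000 in
/-- Up to the factor `-E4`, the discriminant of the quadratic remainder, for `λ = 8 s³ x³` and
`β = x`.  In the variables `x` and `z` every coefficient of the expanded expression is positive. -/
theorem disc_pos {x z : ℝ} (hx : 0 ≤ x) (hz : 0 ≤ z) :
    0 < 4 * (E0 ((z + 2) ^ 2 + 1 + x) (z + 2) * E4 ((z + 2) ^ 2 + 1 + x) (z + 2)
          - (8 * ((z + 2) ^ 2 + 1 + x) ^ 3 * x ^ 3) ^ 2)
        * (E2 ((z + 2) ^ 2 + 1 + x) (z + 2) + 2 * (8 * ((z + 2) ^ 2 + 1 + x) ^ 3 * x ^ 3)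
          + 2 * x * E3 ((z + 2) ^ 2 + 1 + x) (z + 2))
      - (E1 ((z + 2) ^ 2 + 1 + x) (z + 2) - x ^ 2 * E3 ((z + 2) ^ 2 + 1 + x) (z + 2)) ^ 2
        * E4 ((z + 2) ^ 2 + 1 + x) (z + 2) := by
  unfold E0 E1 E2 E3 E4; ring_nf; positivity

/-- A quartic polynomial is positive at `t ≥ 0` as soon as the quadratic polynomial left over after
removing `(e4 t² - lam)² + e4 e3 t (t - b)²` from `e4` times it has positive leading coefficient and
negative discriminant, for some choice of `lam` and `b`. -/
theorem quartic_pos {e0 e1 e2 e3 e4 lam b t : ℝ} (ht : 0 ≤ t) (h3 : 0 ≤ e3) (h4 : 0 < e4)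
    (hH : 0 < e2 + 2 * lam + 2 * b * e3)
    (hD : 0 < 4 * (e0 * e4 - lam ^ 2) * (e2 + 2 * lam + 2 * b * e3) - (e1 - b ^ 2 * e3) ^ 2 * e4) :
    0 < e0 + e1 * t + e2 * t ^ 2 + e3 * t ^ 3 + e4 * t ^ 4 := by
  -- `e4 * H` is the leading coefficient of the quadratic polynomial.
  obtain ⟨H, rfl⟩ : ∃ H, e2 = H - 2 * lam - 2 * b * e3 := ⟨e2 + 2 * lam + 2 * b * e3, by ring⟩
  have hH' : 0 < H := by linarith
  have key : 4 * H * e4 * (e0 + e1 * t + (H - 2 * lam - 2 * b * e3) * t ^ 2 + e3 * t ^ 3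
        + e4 * t ^ 4)
      = 4 * H * (e4 * t ^ 2 - lam) ^ 2 + 4 * H * e4 * e3 * t * (t - b) ^ 2
        + e4 * (2 * H * t + (e1 - b ^ 2 * e3)) ^ 2
        + (4 * (e0 * e4 - lam ^ 2) * H - (e1 - b ^ 2 * e3) ^ 2 * e4) := by ring
  have hD' : 0 < 4 * (e0 * e4 - lam ^ 2) * H - (e1 - b ^ 2 * e3) ^ 2 * e4 := by
    have : H - 2 * lam - 2 * b * e3 + 2 * lam + 2 * b * e3 = H := by ring
    rwa [this] at hD
  have hpos : 0 < 4 * H * e4 * (e0 + e1 * t + (H - 2 * lam - 2 * b * e3) * t ^ 2 + e3 * t ^ 3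
      + e4 * t ^ 4) := by
    rw [key]; positivity
  exact pos_of_mul_pos_right hpos (by positivity)

/-- `NN` at the parameters attached to `(k, l, m)`. -/
def NNp (k l m : ℝ) : ℝ := NN (k + l + m - 2) (k * l + k * m + l * m) (k * l * m)

theorem NNp_pos_of_two_le {k l m : ℝ} (hm : 2 ≤ m) (hlm : m ≤ l) (hkl : l ≤ k)
    (h : m ^ 2 + 1 ≤ k + l) : 0 < NNp k l m := by
  obtain ⟨z, rfl⟩ : ∃ z, m = z + 2 := ⟨m - 2, by ring⟩
  obtain ⟨x, hx⟩ : ∃ x, k + l = (z + 2) ^ 2 + 1 + x := ⟨k + l - ((z + 2) ^ 2 + 1), by ring⟩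
  have hz : 0 ≤ z := by linarith
  have hx0 : 0 ≤ x := by linarith
  have ht : 0 ≤ (k - (z + 2)) * (l - (z + 2)) :=
    mul_nonneg (by linarith) (by linarith)
  have hN : NNp k l (z + 2) = NN (k + l + (z + 2) - 2)
      ((z + 2) * (k + l - (z + 2)) + (k - (z + 2)) * (l - (z + 2)) + (z + 2) * (k + l))
      (((z + 2) * (k + l - (z + 2)) + (k - (z + 2)) * (l - (z + 2))) * (z + 2)) := by
    unfold NNp; congr 1 <;> ring
  rw [hN, NN_expand, hx]
  exact quartic_pos ht (E3_pos hx0 hz).le (E4_pos hx0 hz) (lead_pos hx0 hz) (disc_pos hx0 hz)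

/-! ### Positivity on the remaining pieces -/

theorem NNp_pos_of_one {k l : ℝ} (hl : 2 ≤ l) (hkl : l ≤ k) : 0 < NNp k l 1 := by
  obtain ⟨y, rfl⟩ : ∃ y, l = y + 2 := ⟨l - 2, by ring⟩
  obtain ⟨x, rfl⟩ : ∃ x, k = y + 2 + x := ⟨k - (y + 2), by ring⟩
  have hy : 0 ≤ y := by linarith
  have hx : 0 ≤ x := by linarith
  -- The monomials in `x`, `y` with negative coefficient are grouped with neighbouring ones into
  -- multiples of three quadratics of negative discriminant (the first one in `x` and `y ^ 2`);
  -- what is left has positive coefficients only.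
  have h1 : 0 ≤ x ^ 7 * (16 * x ^ 2 - 13 * x * y ^ 2 + 3 * y ^ 4) :=
    mul_nonneg (by positivity) (by nlinarith [sq_nonneg (32 * x - 13 * y ^ 2), sq_nonneg (y ^ 2)])
  have h2 : 0 ≤ x ^ 7 * y ^ 2 * (5 * y ^ 2 - 102 * y + 670) :=
    mul_nonneg (by positivity) (by nlinarith [sq_nonneg (5 * y - 51)])
  have h3 : 0 ≤ x ^ 6 * y ^ 3 * (80 * y ^ 2 - 149 * y + 1452) :=
    mul_nonneg (by positivity) (by nlinarith [sq_nonneg (y - 1)])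
  have h4 : 0 < NNp (y + 2 + x) (y + 2) 1
      - x ^ 7 * (16 * x ^ 2 - 13 * x * y ^ 2 + 3 * y ^ 4)
      - x ^ 7 * y ^ 2 * (5 * y ^ 2 - 102 * y + 670)
      - x ^ 6 * y ^ 3 * (80 * y ^ 2 - 149 * y + 1452) := by
    unfold NNp NN; ring_nf; positivity
  linarith

theorem NNp_pos_edge {m : ℝ} (h1 : 1 ≤ m) (h2 : m ≤ 2) : 0 < NNp 3 2 m := by
  obtain ⟨x, rfl⟩ : ∃ x, m = 2 - x := ⟨2 - m, by ring⟩
  have hx : 0 ≤ x := by linarith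
  have hx1 : 0 ≤ 1 - x := by linarith
  -- Each negative term is paired with a lower power of `x`, using `0 ≤ x ≤ 1`.
  have key : NNp 3 2 (2 - x) = 40000 + 37325 * x + (21675 * x + 64475 * x ^ 2 - 86150 * x ^ 3)
      + 32365 * x ^ 4 * (1 - x)
      + 19145 * x ^ 5 + 2110 * x ^ 6 * (1 - x) + 4879 * x ^ 6 + 16 * x ^ 8 * (1 - x)
      + 283 * x ^ 8 := by
    unfold NNp NN; ring
  have h3 : 0 ≤ 21675 * x + 64475 * x ^ 2 - 86150 * x ^ 3 := by
    have : 21675 * x + 64475 * x ^ 2 - 86150 * x ^ 3 = x * (1 - x) * (86150 * x + 21675) := by ring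
    rw [this]; positivity
  rw [key]; positivity

theorem NNp_pos_spur {k : ℝ} (h : 8 / 3 ≤ k) : 0 < NNp k 2 (4 / 3) := by
  obtain ⟨x, rfl⟩ : ∃ x, k = 8 / 3 + x := ⟨k - 8 / 3, by ring⟩
  have hx : 0 ≤ x := by linarith
  unfold NNp NN; ring_nf; positivity

/-! ### The relation between `Q` and `NN` -/

/-- The map sending `(k, l, m)` to `(k, l, m) / (2 (k + l + m - 2))`, extending `aPoint` to real
parameters. -/
def wallach (p : ℝ × ℝ × ℝ) : ℝ × ℝ × ℝ :=
  (p.1 / (2 * (p.1 + p.2.1 + p.2.2 - 2)), p.2.1 / (2 * (p.1 + p.2.1 + p.2.2 - 2)),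
    p.2.2 / (2 * (p.1 + p.2.1 + p.2.2 - 2)))

theorem Qpoly_param {d k l m : ℝ} (hd : d ≠ 0) (h : k + l + m = d + 2) :
    Qpoly (k / (2 * d)) (l / (2 * d)) (m / (2 * d))
      = NN d (k * l + k * m + l * m) (k * l * m) / d ^ 12 := by
  have e1 : k / (2 * d) + l / (2 * d) + m / (2 * d) = (d + 2) / (2 * d) := by
    rw [← h]; ring
  have e2 : k / (2 * d) * (l / (2 * d)) + k / (2 * d) * (m / (2 * d))
      + l / (2 * d) * (m / (2 * d)) = (k * l + k * m + l * m) / (4 * d ^ 2) := by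
    field_simp; ring
  have e3 : k / (2 * d) * (l / (2 * d)) * (m / (2 * d)) = (k * l * m) / (8 * d ^ 3) := by
    field_simp; ring
  unfold Qpoly
  simp only [e1, e2, e3]
  generalize k * l + k * m + l * m = u
  generalize k * l * m = v
  unfold NN
  field_simp
  ring

/-! ### The region of real parameters -/

/-- The triples `(k, l, m)` with `2 ≤ m ≤ l ≤ k` and `m² + 1 ≤ k + l`.  For integers the last
condition says `m < √(k + l)`. -/
def bulk : Set (ℝ × ℝ × ℝ) :=
  {p | 2 ≤ p.2.2 ∧ p.2.2 ≤ p.2.1 ∧ p.2.1 ≤ p.1 ∧ p.2.2 ^ 2 + 1 ≤ p.1 + p.2.1}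

/-- The triples `(k, l, 1)` with `2 ≤ l ≤ k`. -/
def face : Set (ℝ × ℝ × ℝ) := {p | p.2.2 = 1 ∧ 2 ≤ p.2.1 ∧ p.2.1 ≤ p.1}

/-- The segment from `(3, 2, 1)` to `(3, 2, 2)`, which joins `face` to `bulk`. -/
def edge : Set (ℝ × ℝ × ℝ) := {p | p.1 = 3 ∧ p.2.1 = 2 ∧ 1 ≤ p.2.2 ∧ p.2.2 ≤ 2}

/-- The segment from `(3, 2, 4/3)`, a point of `edge`, to `(8/3, 2, 4/3)`, the parameters of
`(1/3, 1/4, 1/6)`. -/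
def spur : Set (ℝ × ℝ × ℝ) := {p | p.2.2 = 4 / 3 ∧ p.2.1 = 2 ∧ 8 / 3 ≤ p.1 ∧ p.1 ≤ 3}

/-- The set of real parameters used to connect the given point to `(1/3, 1/4, 1/6)`. -/
def region : Set (ℝ × ℝ × ℝ) := bulk ∪ face ∪ edge ∪ spur

theorem isPreconnected_region : IsPreconnected region := by
  have hM : Convex ℝ bulk := by
    rintro ⟨k, l, m⟩ ⟨h1, h2, h3, h4⟩ ⟨k', l', m'⟩ ⟨h1', h2', h3', h4'⟩ a b ha hb hab
    obtain rfl : b = 1 - a := by linarith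
    simp only at h1 h2 h3 h4 h1' h2' h3' h4'
    simp only [bulk, Set.mem_ofPred_eq, Prod.smul_mk, Prod.mk_add_mk, smul_eq_mul]
    refine ⟨by nlinarith, by nlinarith, by nlinarith, ?_⟩
    nlinarith [mul_le_mul_of_nonneg_left h4 ha, mul_le_mul_of_nonneg_left h4' hb,
      mul_nonneg (mul_nonneg ha hb) (sq_nonneg (m - m'))]
  have hF : Convex ℝ face := by
    rintro ⟨k, l, m⟩ ⟨h1, h2, h3⟩ ⟨k', l', m'⟩ ⟨h1', h2', h3'⟩ a b ha hb hab
    obtain rfl : b = 1 - a := by linarith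
    simp only at h1 h2 h3 h1' h2' h3'
    subst h1 h1'
    simp only [face, Set.mem_ofPred_eq, Prod.smul_mk, Prod.mk_add_mk, smul_eq_mul]
    refine ⟨by ring, by nlinarith, by nlinarith⟩
  have hE : Convex ℝ edge := by
    rintro ⟨k, l, m⟩ ⟨h1, h2, h3, h4⟩ ⟨k', l', m'⟩ ⟨h1', h2', h3', h4'⟩ a b ha hb hab
    obtain rfl : b = 1 - a := by linarith
    simp only at h1 h2 h3 h4 h1' h2' h3' h4'
    subst h1 h2 h1' h2'
    simp only [edge, Set.mem_ofPred_eq, Prod.smul_mk, Prod.mk_add_mk, smul_eq_mul]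
    refine ⟨by ring, by ring, by nlinarith, by nlinarith⟩
  have hS : Convex ℝ spur := by
    rintro ⟨k, l, m⟩ ⟨h1, h2, h3, h4⟩ ⟨k', l', m'⟩ ⟨h1', h2', h3', h4'⟩ a b ha hb hab
    obtain rfl : b = 1 - a := by linarith
    simp only at h1 h2 h3 h4 h1' h2' h3' h4'
    subst h1 h2 h1' h2'
    simp only [spur, Set.mem_ofPred_eq, Prod.smul_mk, Prod.mk_add_mk, smul_eq_mul]
    refine ⟨by ring, by ring, by nlinarith, by nlinarith⟩
  have hME : IsPreconnected (bulk ∪ edge) :=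
    IsPreconnected.union (3, 2, 2) (by norm_num [bulk]) (by norm_num [edge])
      hM.isPreconnected hE.isPreconnected
  have hMEF : IsPreconnected (bulk ∪ edge ∪ face) :=
    IsPreconnected.union (3, 2, 1) (Or.inr (by norm_num [edge])) (by norm_num [face])
      hME hF.isPreconnected
  have hall : IsPreconnected (bulk ∪ edge ∪ face ∪ spur) :=
    IsPreconnected.union (3, 2, 4 / 3) (Or.inl (Or.inr (by norm_num [edge]))) (by norm_num [spur])
      hMEF hS.isPreconnected
  have : region = bulk ∪ edge ∪ face ∪ spur := by
    unfold region; rw [Set.union_right_comm bulk face edge]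
  rwa [this]

theorem region_facts {k l m : ℝ} (h : (k, l, m) ∈ region) :
    0 < m ∧ m ≤ l ∧ l ≤ k ∧ 2 < l + m ∧ 0 < NNp k l m := by
  rcases h with ((h | h) | h) | h
  · obtain ⟨h1, h2, h3, h4⟩ := h
    simp only at h1 h2 h3 h4
    exact ⟨by linarith, h2, h3, by linarith, NNp_pos_of_two_le h1 h2 h3 h4⟩
  · obtain ⟨h1, h2, h3⟩ := h
    simp only at h1 h2 h3
    subst h1
    exact ⟨by linarith, by linarith, h3, by linarith, NNp_pos_of_one h2 h3⟩
  · obtain ⟨h1, h2, h3, h4⟩ := h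
    simp only at h1 h2 h3 h4
    subst h1 h2
    exact ⟨by linarith, by linarith, by linarith, by linarith, NNp_pos_edge h3 h4⟩
  · obtain ⟨h1, h2, h3, h4⟩ := h
    simp only at h1 h2 h3 h4
    subst h1 h2
    exact ⟨by linarith, by linarith, by linarith, by linarith, NNp_pos_spur h3⟩

theorem wallach_mem {p : ℝ × ℝ × ℝ} (hp : p ∈ region) :
    wallach p ∈ cube \ OmegaSet := by
  obtain ⟨k, l, m⟩ := p
  obtain ⟨hm, hml, hlk, h2, hN⟩ := region_facts hp
  have hd : 0 < k + l + m - 2 := by linarith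
  have hc : ∀ t : ℝ, 0 < t → t ≤ k →
      t / (2 * (k + l + m - 2)) ∈ Set.Ioo (0 : ℝ) (1 / 2) := by
    intro t ht htk
    refine ⟨by positivity, ?_⟩
    rw [div_lt_div_iff₀ (by positivity) (by norm_num)]
    linarith
  refine ⟨⟨hc k (by linarith) le_rfl, hc l (by linarith) hlk, hc m hm (by linarith)⟩, ?_⟩
  have hQ := Qpoly_param (k := k) (l := l) (m := m) hd.ne' (by ring)
  change ¬ (Qpoly (k / (2 * (k + l + m - 2))) (l / (2 * (k + l + m - 2)))
    (m / (2 * (k + l + m - 2))) = 0)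
  rw [hQ]
  unfold NNp at hN
  positivity

theorem isPreconnected_image : IsPreconnected (wallach '' region) := by
  refine isPreconnected_region.image _ ?_
  have h : ∀ p ∈ region, 2 * (p.1 + p.2.1 + p.2.2 - 2) ≠ 0 := by
    rintro ⟨k, l, m⟩ hp
    obtain ⟨hm, hml, hlk, h2, -⟩ := region_facts hp
    simp only
    intro h0
    linarith
  unfold wallach
  exact (ContinuousOn.div (by fun_prop) (by fun_prop) h).prodMk
    ((ContinuousOn.div (by fun_prop) (by fun_prop) h).prodMk
      (ContinuousOn.div (by fun_prop) (by fun_prop) h))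

/-! ### The chain of permuted copies -/

theorem mem_compl_perm {a b c : ℝ} (h : (a, b, c) ∈ cube \ OmegaSet) :
    (a, c, b) ∈ cube \ OmegaSet ∧ (b, c, a) ∈ cube \ OmegaSet ∧ (c, b, a) ∈ cube \ OmegaSet := by
  obtain ⟨⟨h1, h2, h3⟩, h0⟩ := h
  change ¬ (Qpoly a b c = 0) at h0
  have q1 : Qpoly a c b = Qpoly a b c := by unfold Qpoly; ring
  have q2 : Qpoly b c a = Qpoly a b c := by unfold Qpoly; ring
  have q3 : Qpoly c b a = Qpoly a b c := by unfold Qpoly; ring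
  refine ⟨⟨⟨h1, h3, h2⟩, ?_⟩, ⟨⟨h2, h3, h1⟩, ?_⟩, ⟨⟨h3, h2, h1⟩, ?_⟩⟩
  · change ¬ (Qpoly a c b = 0); rwa [q1]
  · change ¬ (Qpoly b c a = 0); rwa [q2]
  · change ¬ (Qpoly c b a = 0); rwa [q3]

/-- The image of `region` lies in `O₃`: it is linked to the base point by `A`, `B`, `C`, `D`, the
permuted copies of the image indexed by `(k, l, m)`, `(k, m, l)`, `(l, m, k)`, `(m, l, k)`. -/
theorem wallach_mem_O₃ {p : ℝ × ℝ × ℝ} (hp : p ∈ region) : wallach p ∈ O₃ := by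
  set A := wallach '' region with hA
  set B := (fun q : ℝ × ℝ × ℝ => (q.1, q.2.2, q.2.1)) '' A with hB
  set C := (fun q : ℝ × ℝ × ℝ => (q.2.1, q.2.2, q.1)) '' A with hC
  set D := (fun q : ℝ × ℝ × ℝ => (q.2.2, q.2.1, q.1)) '' A with hD
  have pA : IsPreconnected A := isPreconnected_image
  have pB : IsPreconnected B := pA.image _ (by fun_prop)
  have pC : IsPreconnected C := pA.image _ (by fun_prop)
  have pD : IsPreconnected D := pA.image _ (by fun_prop)
  have r1 : ((3, 2, 2) : ℝ × ℝ × ℝ) ∈ region := by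
    left; left; left; norm_num [bulk]
  have r2 : ((2, 2, 1) : ℝ × ℝ × ℝ) ∈ region := by
    left; left; right; norm_num [face]
  have r3 : ((8 / 3, 2, 4 / 3) : ℝ × ℝ × ℝ) ∈ region := by
    right; norm_num [spur]
  -- The parameters `(3, 2, 2)` satisfy `l = m`, hence `(k, l, m) = (k, m, l)`.
  have pAB : IsPreconnected (A ∪ B) :=
    IsPreconnected.union (wallach (3, 2, 2)) ⟨_, r1, rfl⟩ ⟨_, ⟨_, r1, rfl⟩, rfl⟩ pA pB
  -- The parameters `(2, 2, 1)` satisfy `k = l`, hence `(k, m, l) = (l, m, k)`.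
  have pABC : IsPreconnected (A ∪ B ∪ C) := by
    refine IsPreconnected.union ((wallach (2, 2, 1)).1, (wallach (2, 2, 1)).2.2,
      (wallach (2, 2, 1)).2.1) (Or.inr ⟨_, ⟨_, r2, rfl⟩, rfl⟩) ⟨_, ⟨_, r2, rfl⟩, ?_⟩ pAB pC
    norm_num [wallach]
  -- Again by `l = m`, now in the form `(l, m, k) = (m, l, k)`.
  have pABCD : IsPreconnected (A ∪ B ∪ C ∪ D) := by
    refine IsPreconnected.union ((wallach (3, 2, 2)).2.1, (wallach (3, 2, 2)).2.2,
      (wallach (3, 2, 2)).1) (Or.inr ⟨_, ⟨_, r1, rfl⟩, rfl⟩) ⟨_, ⟨_, r1, rfl⟩, ?_⟩ pABC pD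
    norm_num [wallach]
  have hsub : A ∪ B ∪ C ∪ D ⊆ cube \ OmegaSet := by
    rintro q (((⟨p, hp, rfl⟩ | ⟨_, ⟨p, hp, rfl⟩, rfl⟩) | ⟨_, ⟨p, hp, rfl⟩, rfl⟩) |
      ⟨_, ⟨p, hp, rfl⟩, rfl⟩)
    · exact wallach_mem hp
    · exact (mem_compl_perm (wallach_mem hp)).1
    · exact (mem_compl_perm (wallach_mem hp)).2.1
    · exact (mem_compl_perm (wallach_mem hp)).2.2
  have hbase : ((1 / 6, 1 / 4, 1 / 3) : ℝ × ℝ × ℝ) ∈ A ∪ B ∪ C ∪ D := by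
    refine Or.inr ⟨_, ⟨_, r3, rfl⟩, ?_⟩
    norm_num [wallach]
  exact pABCD.subset_connectedComponentIn hbase hsub (Or.inl (Or.inl (Or.inl ⟨p, hp, rfl⟩)))

theorem stmt15 (k l m : ℕ) (hkl : l ≤ k) (hlm : m ≤ l) (hm : 1 ≤ m) (hl : 2 ≤ l)
    (hsqrt : (m : ℝ) < Real.sqrt ((k : ℝ) + l)) :
    aPoint k l m ∈ O₃ := by
  have hsq : m ^ 2 + 1 ≤ k + l := by
    have h : (m : ℝ) ^ 2 < (k : ℝ) + l := (Real.lt_sqrt (Nat.cast_nonneg m)).1 hsqrt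
    exact_mod_cast h
  have hkl' : (l : ℝ) ≤ k := by exact_mod_cast hkl
  have hlm' : (m : ℝ) ≤ l := by exact_mod_cast hlm
  have hl' : (2 : ℝ) ≤ l := by exact_mod_cast hl
  refine wallach_mem_O₃ (p := ((k : ℝ), (l : ℝ), (m : ℝ))) ?_
  left; left
  rcases hm.eq_or_lt with rfl | hm2
  · right
    exact ⟨by simp, hl', hkl'⟩
  · left
    have h2 : (2 : ℝ) ≤ m := by exact_mod_cast hm2
    have h4 : (m : ℝ) ^ 2 + 1 ≤ (k : ℝ) + l := by exact_mod_cast hsq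
    exact ⟨h2, hlm', hkl', h4⟩
end
end

section
/- For every positive integer t (indeed for every real t > 0), Q((t²+1)/(4t(t+1)), (t²+1)/(4t(t+1)), 1/(2(t+1))) = 0. In other words, for (k,l,m) = (t²+1, t²+1, 2t) the parameters (a₁,a₂,a₃) = (k/(2(k+l+m−2)), l/(2(k+l+m−2)), m/(2(k+l+m−2))) of SO(2(t²+t+1))/SO(t²+1)×SO(t²+1)×SO(2t) lie on the surface Ω. -/
/-!
On the diagonal plane `a₁ = a₂ = a` the polynomial `Q` factors (`Qpoly_diag`), one of the factors
being `4 (1 - 2c) (a + c) - 1` with `c = a₃`. On the given curve `1 - 2c = t / (t + 1)` and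
`a + c = (t + 1) / (4t)`, so this factor vanishes identically.
-/


noncomputable section

/-- The factorization of `Q` on the plane `a₁ = a₂`. -/
theorem Qpoly_diag (a c : ℝ) :
    Qpoly a a c = (4 * (1 - 2 * c) * (a + c) - 1) * (1 + 2 * c)
      * (1 - 4 * a - 2 * c + 16 * a ^ 2 * (a + c)) ^ 3 := by
  unfold Qpoly
  ring

theorem stmt17 (t : ℝ) (ht : 0 < t) :
    Qpoly ((t ^ 2 + 1) / (4 * t * (t + 1))) ((t ^ 2 + 1) / (4 * t * (t + 1)))
      (1 / (2 * (t + 1))) = 0 := by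
  have hfactor : 4 * (1 - 2 * (1 / (2 * (t + 1))))
      * ((t ^ 2 + 1) / (4 * t * (t + 1)) + 1 / (2 * (t + 1))) - 1 = 0 := by
    field_simp
    ring
  rw [Qpoly_diag, hfactor, zero_mul, zero_mul]
end
end
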